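/- Let s > 1, q ∈ [1,∞], and let f ∈ L¹(ℝ^d) have compact support. For k > 0 put ω_k(ξ) = exp(k·|ξ|^{1/s}). Then ⋂_{k>0} WF_{FL^q_{ω_k}}(f) = WF_s(f). -/

import Mathlib

open MeasureTheory Complex Set
open scoped ENNReal RealInnerProductSpace NNReal

noncomputable section

namespace Paper

variable {d : ℕ}

/-- The Fourier transform, normalized by `(2π)^{-d/2}`. -/
def FT (f : EuclideanSpace ℝ (Fin d) → ℂ) (ξ : EuclideanSpace ℝ (Fin d)) : ℂ :=
  ((2 * Real.pi) ^ (-(d : ℝ) / 2) : ℝ) *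
    ∫ x, f x * Complex.exp (-(⟪x, ξ⟫ : ℝ) * Complex.I)

/-- The short-time Fourier transform `V_φ f (x, ξ)`. -/
def STFT (φ f : EuclideanSpace ℝ (Fin d) → ℂ) (x ξ : EuclideanSpace ℝ (Fin d)) : ℂ :=
  ((2 * Real.pi) ^ (-(d : ℝ) / 2) : ℝ) *
    ∫ y, f y * (starRingEnd ℂ) (φ (y - x)) * Complex.exp (-(⟪ξ, y⟫ : ℝ) * Complex.I)

/-- A cone in `ℝ^d ∖ {0}`. -/
def IsCone (Γ : Set (EuclideanSpace ℝ (Fin d))) : Prop :=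
  (0 : EuclideanSpace ℝ (Fin d)) ∉ Γ ∧ ∀ ξ ∈ Γ, ∀ t : ℝ, 0 < t → t • ξ ∈ Γ

/-- An `s`-cutoff: smooth, compactly supported, with Fourier transform decaying faster
than every `exp (-N |ξ|^{1/s})`. -/
def IsSCutoff (s : ℝ) (φ : EuclideanSpace ℝ (Fin d) → ℂ) : Prop :=
  ContDiff ℝ (⊤ : ℕ∞) φ ∧ HasCompactSupport φ ∧
    ∀ N : ℝ, 0 < N → ∃ C : ℝ, 0 < C ∧
      ∀ ξ, ‖FT φ ξ‖ ≤ C * Real.exp (-N * ‖ξ‖ ^ (1 / s))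

/-- An `s`-admissible weight: positive, measurable, and moderate with respect to an even
submultiplicative weight of sub-exponential growth of order `1/s`. -/
def IsSAdmissible (s : ℝ) (ω : EuclideanSpace ℝ (Fin d) → ℝ) : Prop :=
  Measurable ω ∧ (∀ x, 0 < ω x) ∧
    ∃ v : EuclideanSpace ℝ (Fin d) → ℝ, Measurable v ∧ (∀ x, 0 < v x) ∧
      (∀ x, v (-x) = v x) ∧ (∀ x y, v (x + y) ≤ v x * v y) ∧
      ∃ C₀ k₀ C₁ : ℝ, 0 < C₀ ∧ 0 < k₀ ∧ 0 < C₁ ∧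
        (∀ ξ, v ξ ≤ C₀ * Real.exp (k₀ * ‖ξ‖ ^ (1 / s))) ∧
        ∀ x y, ω (x + y) ≤ C₁ * v x * ω y

/-- The Fourier–Lebesgue seminorm `( ∫_Γ (|f̂| ω)^q )^{1/q}` (ess-sup when `q = ∞`). -/
def FLSemi (ω : EuclideanSpace ℝ (Fin d) → ℝ) (q : ℝ≥0∞)
    (f : EuclideanSpace ℝ (Fin d) → ℂ) (Γ : Set (EuclideanSpace ℝ (Fin d))) : ℝ≥0∞ :=
  eLpNorm (fun ξ => ‖FT f ξ‖ * ω ξ) q (volume.restrict Γ)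

/-- The Fourier–Lebesgue wave-front set `WF_{FL^q_ω} f`. -/
def WF_FL (s : ℝ) (q : ℝ≥0∞) (ω : EuclideanSpace ℝ (Fin d) → ℝ)
    (f : EuclideanSpace ℝ (Fin d) → ℂ) :
    Set (EuclideanSpace ℝ (Fin d) × EuclideanSpace ℝ (Fin d)) :=
  {z | z.2 ≠ 0 ∧ ∀ φ : EuclideanSpace ℝ (Fin d) → ℂ, IsSCutoff s φ → φ z.1 ≠ 0 →
    ∀ Γ : Set (EuclideanSpace ℝ (Fin d)), IsOpen Γ → IsCone Γ → z.2 ∈ Γ →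
      FLSemi ω q (fun x => φ x * f x) Γ = ∞}

/-- The `s`-wave-front set `WF_s f`. -/
def WFs (s : ℝ) (f : EuclideanSpace ℝ (Fin d) → ℂ) :
    Set (EuclideanSpace ℝ (Fin d) × EuclideanSpace ℝ (Fin d)) :=
  {z | z.2 ≠ 0 ∧ ¬ ∃ φ : EuclideanSpace ℝ (Fin d) → ℂ, IsSCutoff s φ ∧
    (∃ U : Set (EuclideanSpace ℝ (Fin d)), IsOpen U ∧ z.1 ∈ U ∧ ∀ x ∈ U, φ x = 1) ∧
    ∃ Γ : Set (EuclideanSpace ℝ (Fin d)), IsOpen Γ ∧ IsCone Γ ∧ z.2 ∈ Γ ∧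
      ∃ C k : ℝ, 0 < C ∧ 0 < k ∧
        ∀ ξ ∈ Γ, ‖FT (fun x => φ x * f x) ξ‖ ≤ C * Real.exp (-k * ‖ξ‖ ^ (1 / s))}

/-- The mixed modulation-space seminorm
`( ∫_Γ ( ∫ |V_g F(x,ξ)|^p dx )^{q/p} ω(ξ)^q dξ )^{1/q}` with the usual
ess-sup interpretations for `p = ∞` or `q = ∞`. -/
def ModSemi (g F : EuclideanSpace ℝ (Fin d) → ℂ) (ω : EuclideanSpace ℝ (Fin d) → ℝ)
    (p q : ℝ≥0∞) (Γ : Set (EuclideanSpace ℝ (Fin d))) : ℝ≥0∞ :=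
  if q = ∞ then
    essSup (fun ξ => eLpNorm (fun x => STFT g F x ξ) p volume * ENNReal.ofReal (ω ξ))
      (volume.restrict Γ)
  else
    (∫⁻ ξ in Γ, (eLpNorm (fun x => STFT g F x ξ) p volume * ENNReal.ofReal (ω ξ)) ^ q.toReal) ^
      (1 / q.toReal)

/-- The modulation wave-front set `WF_{M^{p,q}_ω} f`, with window `g`. -/
def WF_M (s : ℝ) (p q : ℝ≥0∞) (ω : EuclideanSpace ℝ (Fin d) → ℝ)
    (g f : EuclideanSpace ℝ (Fin d) → ℂ) :
    Set (EuclideanSpace ℝ (Fin d) × EuclideanSpace ℝ (Fin d)) :=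
  {z | z.2 ≠ 0 ∧ ∀ φ : EuclideanSpace ℝ (Fin d) → ℂ, IsSCutoff s φ → φ z.1 ≠ 0 →
    ∀ Γ : Set (EuclideanSpace ℝ (Fin d)), IsOpen Γ → IsCone Γ → z.2 ∈ Γ →
      ModSemi g (fun x => φ x * f x) ω p q Γ = ∞}

/-- Reinterpret a plain vector as a point of Euclidean space. -/
def toE (x : Fin d → ℝ) : EuclideanSpace ℝ (Fin d) :=
  (EuclideanSpace.equiv (Fin d) ℝ).symm x

/-- The point `A k` of the lattice `A(ℤ^d)`. -/
def latPt (A : Matrix (Fin d) (Fin d) ℝ) (k : Fin d → ℤ) : EuclideanSpace ℝ (Fin d) :=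
  toE (A.mulVec fun i => (k i : ℝ))

/-- The point `c (Aᵀ)⁻¹ k` of the dual lattice `c (Aᵀ)⁻¹(ℤ^d)`. -/
def dualLatPt (A : Matrix (Fin d) (Fin d) ℝ) (c : ℝ) (k : Fin d → ℤ) :
    EuclideanSpace ℝ (Fin d) :=
  toE (c • (A.transpose⁻¹.mulVec fun i => (k i : ℝ)))

/-- The parallelepiped `x₁ + A([0,1]^d)`. -/
def lattPara (A : Matrix (Fin d) (Fin d) ℝ) (x₁ : EuclideanSpace ℝ (Fin d)) :
    Set (EuclideanSpace ℝ (Fin d)) :=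
  (fun t : Fin d → ℝ => x₁ + toE (A.mulVec t)) '' (Set.univ.pi fun _ => Set.Icc 0 1)

/-- The adjoint short-time Fourier transform `V*_φ F`. -/
def VStar (φ : EuclideanSpace ℝ (Fin d) → ℂ)
    (F : EuclideanSpace ℝ (Fin d) × EuclideanSpace ℝ (Fin d) → ℂ)
    (t : EuclideanSpace ℝ (Fin d)) : ℂ :=
  ((2 * Real.pi) ^ (-(d : ℝ) / 2) : ℝ) *
    ∫ z : EuclideanSpace ℝ (Fin d) × EuclideanSpace ℝ (Fin d),
      F z * Complex.exp ((⟪z.2, t⟫ : ℝ) * Complex.I) * φ (t - z.1)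

/-!
That `WF_s(f)` contains the intersection is immediate: decay `exp (-k|ξ|^{1/s})` on `Γ` makes every
`L^q` norm weighted by `exp (k'|ξ|^{1/s})`, `k' < k`, finite there. Conversely, let `φ` be a cutoff
with `φ x₀ ≠ 0` for which `ℱ(φf)` has finite weighted `L^q` norm on `Γ`; by Hölder (for `q < 1`, by
boundedness of `ℱ(φf)`) its `L¹` norm for a smaller weight is finite as well. Near `x₀` the function
`φ` can be inverted: for small `r` the function `(φ x₀ - φ(x₀ + r·))χ` has small norm in a Beurling
algebra of functions whose Fourier transform is integrable against `exp (c|ξ|^{1/s})`, and the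
Neumann series gives `g` with stretched exponentially decaying Fourier transform such that `ψ = gφ`
is a cutoff equal to `1` near `x₀`. Then `ℱ(ψf)` is the convolution of `ℱg` and `ℱ(φf)`, which is
pointwise exponentially small on a smaller cone because frequencies outside `Γ` are at distance
`≥ c|ξ|` from `ξ`.

The plateau functions `χ` come from a random series `∑ aⱼXⱼ` with `Xⱼ` independent and
`aⱼ` polynomially small: its law is compactly supported, and its characteristic function is an
infinite product bounded by `exp (-c|t|^p)` with `1/s < p < 1`.
-/

local notation "ℝᵈ" => EuclideanSpace ℝ (Fin d)

open Filter Topology FourierTransform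

/-! ### The Fourier transform -/

/-- The normalizing factor `(2π)^{-d/2}` of the Fourier transform `FT`. -/
def fourierFactor (d : ℕ) : ℝ :=
  (2 * Real.pi) ^ (-(d : ℝ) / 2)

lemma fourierFactor_pos (d : ℕ) : 0 < fourierFactor d := by
  unfold fourierFactor
  positivity

lemma fourierFactor_sq (d : ℕ) : fourierFactor d ^ 2 = ((2 * Real.pi) ^ d)⁻¹ := by
  rw [fourierFactor, ← Real.rpow_mul_natCast (by positivity), Nat.cast_ofNat,
    div_mul_cancel₀ _ two_ne_zero, Real.rpow_neg (by positivity), Real.rpow_natCast]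

lemma FT_eq_fourierIntegral (f : ℝᵈ → ℂ) (ξ : ℝᵈ) :
    FT f ξ = fourierFactor d *
      VectorFourier.fourierIntegral Real.probChar volume (innerₗ ℝᵈ) f ξ := by
  simp only [VectorFourier.fourierIntegral_probChar, FT, fourierFactor, innerₗ_apply_apply,
    smul_eq_mul, mul_comm (f _)]

lemma FT_eq_fourier (f : ℝᵈ → ℂ) (ξ : ℝᵈ) :
    FT f ξ = fourierFactor d * 𝓕 f ((2 * Real.pi)⁻¹ • ξ) := by
  have hpi : 2 * Real.pi ≠ 0 := by positivity
  rw [FT_eq_fourierIntegral, Real.fourier_eq', VectorFourier.fourierIntegral_probChar]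
  simp only [innerₗ_apply_apply, inner_smul_right, neg_mul, mul_inv_cancel_left₀ hpi, ofReal_neg]

lemma continuous_FT {f : ℝᵈ → ℂ} (hf : Integrable f) : Continuous (FT f) := by
  simp only [funext (FT_eq_fourierIntegral f)]
  exact continuous_const.mul (VectorFourier.fourierIntegral_continuous Real.continuous_probChar
    continuous_inner hf)

lemma norm_FT_le (f : ℝᵈ → ℂ) (ξ : ℝᵈ) : ‖FT f ξ‖ ≤ fourierFactor d * ∫ x, ‖f x‖ := by
  rw [FT_eq_fourierIntegral, norm_mul, norm_real, Real.norm_of_nonneg (fourierFactor_pos d).le]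
  gcongr
  · exact (fourierFactor_pos d).le
  · exact VectorFourier.norm_fourierIntegral_le_integral_norm ..

lemma FT_add {f g : ℝᵈ → ℂ} (hf : Integrable f) (hg : Integrable g) (ξ : ℝᵈ) :
    FT (fun x => f x + g x) ξ = FT f ξ + FT g ξ := by
  simp only [FT_eq_fourierIntegral, ← mul_add]
  congr 1
  exact congrFun (VectorFourier.fourierIntegral_add (L := innerₗ ℝᵈ)
    Real.continuous_probChar continuous_inner hf hg) ξ

lemma FT_const_mul (c : ℂ) (f : ℝᵈ → ℂ) (ξ : ℝᵈ) : FT (fun x => c * f x) ξ = c * FT f ξ := by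
  simp only [FT, mul_assoc, integral_const_mul]
  exact mul_left_comm ..

lemma FT_sub {f g : ℝᵈ → ℂ} (hf : Integrable f) (hg : Integrable g) (ξ : ℝᵈ) :
    FT (fun x => f x - g x) ξ = FT f ξ - FT g ξ := by
  simp only [sub_eq_add_neg, ← neg_one_mul (g _), ← neg_one_mul (FT g _), ← FT_const_mul]
  exact FT_add hf (hg.const_mul (-1)) ξ

lemma FT_comp_smul (f : ℝᵈ → ℂ) {c : ℝ} (hc : c ≠ 0) (ξ : ℝᵈ) :
    FT (fun x => f (c • x)) ξ = ((|c| ^ d)⁻¹ : ℝ) * FT f (c⁻¹ • ξ) := by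
  have h := Measure.integral_comp_smul volume
    (fun x : ℝᵈ => f x * exp (-(⟪x, c⁻¹ • ξ⟫ : ℝ) * I)) c
  simp only [real_inner_smul_left, inner_smul_right, inv_mul_cancel_left₀ hc,
    finrank_euclideanSpace, Fintype.card_fin, real_smul, abs_inv, abs_pow] at h
  rw [FT, h, FT, mul_left_comm]
  simp only [inner_smul_right]

lemma FT_comp_add (f : ℝᵈ → ℂ) (a ξ : ℝᵈ) :
    FT (fun x => f (a + x)) ξ = exp ((⟪a, ξ⟫ : ℝ) * I) * FT f ξ := by
  have h (x : ℝᵈ) : f (a + x) * exp (-(⟪x, ξ⟫ : ℝ) * I) =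
      exp ((⟪a, ξ⟫ : ℝ) * I) * (f (a + x) * exp (-(⟪a + x, ξ⟫ : ℝ) * I)) := by
    rw [mul_left_comm, ← Complex.exp_add, inner_add_left]
    push_cast
    ring_nf
  rw [FT, integral_congr_ae (.of_forall h), integral_const_mul,
    integral_add_left_eq_self fun x => f x * exp (-(⟪x, ξ⟫ : ℝ) * I), FT, mul_left_comm]

lemma norm_FT_comp_add_smul (f : ℝᵈ → ℂ) (a : ℝᵈ) {c : ℝ} (hc : c ≠ 0) (ξ : ℝᵈ) :
    ‖FT (fun x => f (a + c • x)) ξ‖ = (|c| ^ d)⁻¹ * ‖FT f (c⁻¹ • ξ)‖ := by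
  rw [FT_comp_smul (fun x => f (a + x)) hc, FT_comp_add, norm_mul, norm_mul,
    norm_exp_ofReal_mul_I, one_mul, norm_real, Real.norm_of_nonneg (by positivity)]

theorem FT_FT {f : ℝᵈ → ℂ} (hc : Continuous f) (hf : Integrable f) (hF : Integrable (FT f))
    (x : ℝᵈ) : FT (FT f) x = f (-x) := by
  have hpi : 2 * Real.pi ≠ 0 := by positivity
  have hfac : (fourierFactor d : ℂ) ≠ 0 := mod_cast (fourierFactor_pos d).ne'
  have hfac_sq : (fourierFactor d : ℂ) ^ 2 = ((2 * Real.pi : ℂ) ^ d)⁻¹ :=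
    mod_cast congrArg ((↑) : ℝ → ℂ) (fourierFactor_sq d)
  have h𝓕 (g : ℝᵈ → ℂ) : 𝓕 g = fun ξ => (fourierFactor d : ℂ)⁻¹ * FT g ((2 * Real.pi) • ξ) := by
    ext ξ
    rw [FT_eq_fourier, inv_smul_smul₀ hpi, inv_mul_cancel_left₀ hfac]
  have hint : Integrable (𝓕 f) := by
    rw [h𝓕]
    exact (hF.comp_smul hpi).const_mul _
  rw [← congrFun (hc.fourierInv_fourier_eq hf hint) (-x), Real.fourierInv_eq_fourier_neg, neg_neg]
  simp only [h𝓕, FT_const_mul, FT_comp_smul _ hpi, inv_smul_smul₀ hpi]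
  rw [abs_of_pos (by positivity)]
  push_cast
  rw [← hfac_sq]
  field_simp

theorem integral_FT_mul {f g : ℝᵈ → ℂ} (hf : Integrable f) (hg : Integrable g) :
    ∫ x, FT f x * g x = ∫ x, f x * FT g x := by
  have hflip : (innerₗ ℝᵈ).flip = innerₗ ℝᵈ := by
    ext x y
    exact real_inner_comm x y
  have h := VectorFourier.integral_fourierIntegral_smul_eq_flip (L := innerₗ ℝᵈ)
    Real.continuous_probChar continuous_inner hf hg
  simp only [hflip, smul_eq_mul] at h
  simp only [FT_eq_fourierIntegral, mul_assoc, mul_left_comm (f _), integral_const_mul, h]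

lemma FT_exp_mul_comp_neg (u : ℝᵈ → ℂ) (ξ η : ℝᵈ) :
    FT (fun x => exp ((⟪x, ξ⟫ : ℝ) * I) * u (-x)) η = FT u (ξ - η) := by
  unfold FT
  rw [← integral_neg_eq_self]
  congr 2 with x
  beta_reduce
  rw [neg_neg, mul_right_comm, ← Complex.exp_add, mul_comm]
  simp only [inner_neg_left, inner_sub_right]
  push_cast
  ring_nf

lemma integrable_exp_mul {u : ℝᵈ → ℂ} (hu : Integrable u) (ξ : ℝᵈ) :
    Integrable fun x => exp ((⟪x, ξ⟫ : ℝ) * I) * u x :=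
  hu.bdd_mul (c := 1) (by fun_prop) (.of_forall fun x => (norm_exp_ofReal_mul_I _).le)

theorem FT_mul {g u : ℝᵈ → ℂ} (hc : Continuous g) (hg : Integrable g) (hG : Integrable (FT g))
    (hu : Integrable u) (ξ : ℝᵈ) :
    FT (fun x => g x * u x) ξ = fourierFactor d * ∫ η, FT g η * FT u (ξ - η) := by
  calc FT (fun x => g x * u x) ξ
      = fourierFactor d * ∫ x, FT (FT g) x * (exp ((⟪x, ξ⟫ : ℝ) * I) * u (-x)) := by
        rw [FT, ← integral_neg_eq_self]
        simp only [FT_FT hc hg hG, inner_neg_left, ofReal_neg, neg_neg, mul_assoc,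
          mul_comm (u _), fourierFactor]
    _ = fourierFactor d * ∫ η, FT g η * FT u (ξ - η) := by
        rw [integral_FT_mul hG (integrable_exp_mul hu.comp_neg ξ)]
        simp only [FT_exp_mul_comp_neg]

lemma norm_FT_mul_le {g u : ℝᵈ → ℂ} (hc : Continuous g) (hg : Integrable g)
    (hG : Integrable (FT g)) (hu : Integrable u) {ξ : ℝᵈ} {Ψ : ℝᵈ → ℝ} (hΨ : Integrable Ψ)
    (h : ∀ η, ‖FT g η‖ * ‖FT u (ξ - η)‖ ≤ Ψ η) :
    ‖FT (fun x => g x * u x) ξ‖ ≤ fourierFactor d * ∫ η, Ψ η := by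
  rw [FT_mul hc hg hG hu, norm_mul, norm_real, Real.norm_of_nonneg (fourierFactor_pos d).le]
  gcongr
  · exact (fourierFactor_pos d).le
  · exact norm_integral_le_of_norm_le hΨ (.of_forall fun η => (norm_mul _ _).trans_le (h η))

/-! ### The weights `exp (-c‖x‖ᵖ)` -/

section Weights

lemma norm_rpow_le_norm_sub_rpow_add {E : Type*} [SeminormedAddCommGroup E] {p : ℝ} (hp : 0 ≤ p)
    (hp1 : p ≤ 1) (x y : E) : ‖x‖ ^ p ≤ ‖x - y‖ ^ p + ‖y‖ ^ p :=
  (Real.rpow_le_rpow (norm_nonneg x) (norm_le_norm_sub_add x y) hp).trans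
    (Real.rpow_add_le_add_rpow (norm_nonneg _) (norm_nonneg _) hp hp1)

lemma exists_mul_rpow_le_mul_rpow_add {a b c N : ℝ} (ha : 0 ≤ a) (hab : a < b) (hc : 0 < c)
    (hN : 0 ≤ N) : ∃ C, ∀ t, 0 ≤ t → N * t ^ a ≤ c * t ^ b + C := by
  let T := (N / c) ^ (b - a)⁻¹
  have hba : 0 < b - a := sub_pos.2 hab
  refine ⟨N * T ^ a, fun t ht => ?_⟩
  rcases le_total t T with h | h
  · have hle : N * t ^ a ≤ N * T ^ a := by gcongr
    have hnonneg : 0 ≤ c * t ^ b := by positivity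
    linarith
  · have hN_le : N ≤ c * t ^ (b - a) := by
      rw [← div_le_iff₀' hc, ← Real.rpow_inv_le_iff_of_pos (by positivity) ht hba]
      exact h
    calc N * t ^ a ≤ c * t ^ (b - a) * t ^ a := by gcongr
      _ = c * t ^ b := by
        rw [mul_assoc, ← Real.rpow_add_of_nonneg ht hba.le ha, sub_add_cancel]
      _ ≤ c * t ^ b + N * T ^ a := le_add_of_nonneg_right (by positivity)

variable {E : Type*} [NormedAddCommGroup E] [NormedSpace ℝ E] [FiniteDimensional ℝ E]
  [MeasurableSpace E] [BorelSpace E] (μ : Measure E) [μ.IsAddHaarMeasure] {c p : ℝ}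

lemma integrable_norm_pow_mul_exp_neg_mul_norm_rpow (hc : 0 < c) (hp : 0 < p) (n : ℕ) :
    Integrable (fun x : E => ‖x‖ ^ n * Real.exp (-c * ‖x‖ ^ p)) μ := by
  rcases subsingleton_or_nontrivial E with hE | hE
  · exact .of_finite
  rw [integrable_fun_norm_addHaar μ (f := fun t => t ^ n * Real.exp (-c * t ^ p))]
  refine (integrableOn_rpow_mul_exp_neg_mul_rpow
    (s := ((Module.finrank ℝ E - 1 + n : ℕ) : ℝ)) ?_ hp hc).congr_fun
    (fun t _ => ?_) measurableSet_Ioi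
  · linarith [(Nat.cast_nonneg (Module.finrank ℝ E - 1 + n) : (0 : ℝ) ≤ _)]
  · simp only [Real.rpow_natCast, pow_add, smul_eq_mul, mul_assoc]

lemma integrable_exp_neg_mul_norm_rpow (hc : 0 < c) (hp : 0 < p) :
    Integrable (fun x : E => Real.exp (-c * ‖x‖ ^ p)) μ := by
  simpa using integrable_norm_pow_mul_exp_neg_mul_norm_rpow μ hc hp 0

lemma memLp_exp_neg_mul_norm_rpow (hc : 0 < c) (hp : 0 < p) (q : ℝ≥0∞) :
    MemLp (fun x : E => Real.exp (-c * ‖x‖ ^ p)) q μ := by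
  have hmeas := (integrable_exp_neg_mul_norm_rpow μ hc hp).aestronglyMeasurable
  rcases eq_or_ne q 0 with rfl | hq0
  · exact memLp_zero_iff_aestronglyMeasurable.2 hmeas
  rcases eq_or_ne q ∞ with rfl | hq
  · refine memLp_top_of_bound hmeas 1 (.of_forall fun x => ?_)
    rw [Real.norm_of_nonneg (by positivity), Real.exp_le_one_iff, neg_mul, neg_nonpos]
    positivity
  · rw [← integrable_norm_rpow_iff hmeas hq0 hq]
    have hcq : 0 < c * q.toReal := mul_pos hc (ENNReal.toReal_pos hq0 hq)
    refine (integrable_exp_neg_mul_norm_rpow μ hcq hp).congr (.of_forall fun x => ?_)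
    beta_reduce
    rw [Real.norm_of_nonneg (by positivity), ← Real.exp_mul]
    ring_nf

end Weights

lemma integrable_FT_of_norm_le {f : ℝᵈ → ℂ} (hf : Integrable f) {C c p : ℝ} (hc : 0 < c)
    (hp : 0 < p) (h : ∀ ξ, ‖FT f ξ‖ ≤ C * Real.exp (-c * ‖ξ‖ ^ p)) : Integrable (FT f) :=
  ((integrable_exp_neg_mul_norm_rpow volume hc hp).const_mul C).mono'
    (continuous_FT hf).aestronglyMeasurable (.of_forall h)

lemma contDiff_of_norm_FT_le {f : ℝᵈ → ℂ} (hfc : Continuous f) (hf : Integrable f) {C c p : ℝ}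
    (hc : 0 < c) (hp : 0 < p) (h : ∀ ξ, ‖FT f ξ‖ ≤ C * Real.exp (-c * ‖ξ‖ ^ p)) {n : ℕ∞} :
    ContDiff ℝ n f := by
  have hF := integrable_FT_of_norm_le hf hc hp h
  have hmoment (m : ℕ) : Integrable fun ξ => ‖ξ‖ ^ m * ‖FT f ξ‖ := by
    refine ((integrable_norm_pow_mul_exp_neg_mul_norm_rpow volume hc hp m).const_mul C).mono'
      (by fun_prop (disch := exact hF.aestronglyMeasurable)) (.of_forall fun ξ => ?_)
    rw [Real.norm_of_nonneg (by positivity), mul_left_comm]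
    gcongr
    exact h ξ
  have hrepr : f = fun x => fourierFactor d * 𝓕 (FT f) ((2 * Real.pi)⁻¹ • -x) := by
    ext x
    rw [← FT_eq_fourier, FT_FT hfc hf hF, neg_neg]
  have hsmooth : ContDiff ℝ n (𝓕 (FT f)) := Real.contDiff_fourier fun m _ => hmoment m
  rw [hrepr]
  fun_prop

/-! ### Compactly supported laws with stretched exponentially decaying characteristic function -/

section RandomSeries

open ProbabilityTheory

variable {E : Type*} [NormedAddCommGroup E] [InnerProductSpace ℝ E] [MeasurableSpace E]

lemma charFun_withDensity_ofReal {μ : Measure E} {b : E → ℝ} (hb : Measurable b)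
    (hb0 : ∀ x, 0 ≤ b x) (t : E) :
    charFun (μ.withDensity fun x => .ofReal (b x)) t =
      VectorFourier.fourierIntegral Real.fourierChar μ (innerₗ E) (fun x => (b x : ℂ))
        (-(2 * Real.pi)⁻¹ • t) := by
  rw [charFun_eq_fourierIntegral', VectorFourier.fourierIntegral,
    integral_withDensity_eq_integral_toReal_smul hb.ennreal_ofReal (by simp)]
  refine integral_congr_ae (.of_forall fun x => ?_)
  simp only [ENNReal.toReal_ofReal (hb0 x), Pi.one_apply, Circle.smul_def, smul_eq_mul, mul_one,
    real_smul]
  exact mul_comm _ _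

lemma exists_isProbabilityMeasure_norm_mul_norm_charFun_le (E : Type*) [NormedAddCommGroup E]
    [InnerProductSpace ℝ E] [MeasurableSpace E] [BorelSpace E] [FiniteDimensional ℝ E] :
    ∃ μ : Measure E, IsProbabilityMeasure μ ∧ (∀ᵐ x ∂μ, ‖x‖ ≤ 1) ∧
      ∃ A, 0 < A ∧ ∀ t, ‖t‖ * ‖charFun μ t‖ ≤ A := by
  let b : ContDiffBump (0 : E) := ⟨1 / 2, 1, by norm_num, by norm_num⟩
  have hmeas : Measurable (b.normed volume) := b.continuous_normed.measurable
  refine ⟨volume.withDensity fun x => .ofReal (b.normed volume x), ⟨?_⟩, ?_, ?_⟩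
  · rw [withDensity_apply _ .univ, Measure.restrict_univ,
      ← ofReal_integral_eq_lintegral_ofReal b.integrable_normed (.of_forall b.nonneg_normed),
      b.integral_normed, ENNReal.ofReal_one]
  · refine (ae_withDensity_iff hmeas.ennreal_ofReal).2 (.of_forall fun x hx => ?_)
    have hx_mem : x ∈ Function.support (b.normed volume) := fun h => hx (by simp [h])
    rw [b.support_normed_eq, mem_ball_zero_iff] at hx_mem
    exact hx_mem.le
  · have hsupp : HasCompactSupport fun x => (b.normed volume x : ℂ) :=
      b.hasCompactSupport_normed.comp_left ofReal_zero
    have hsmooth : ContDiff ℝ (⊤ : ℕ∞) fun x => (b.normed volume x : ℂ) :=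
      ofRealCLM.contDiff.comp b.contDiff_normed
    let F : SchwartzMap E ℂ := hsupp.toSchwartzMap hsmooth
    obtain ⟨C, hC, hF⟩ := (𝓕 F).decay 1 0
    refine ⟨2 * Real.pi * C, by positivity, fun t => ?_⟩
    have hFt := hF (-(2 * Real.pi)⁻¹ • t)
    rw [norm_iteratedFDeriv_zero, pow_one, norm_smul, norm_neg, norm_inv,
      Real.norm_of_nonneg (by positivity), mul_assoc, inv_mul_le_iff₀ (by positivity)] at hFt
    rw [charFun_withDensity_ofReal hmeas b.nonneg_normed]
    exact hFt

variable [BorelSpace E] [SecondCountableTopology E] {Ω : Type*} [MeasurableSpace Ω] {P : Measure Ω}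

lemma tendsto_charFun_map_of_ae_tendsto [IsFiniteMeasure P]
    {S : ℕ → Ω → E} {Y : Ω → E} (hS : ∀ n, AEMeasurable (S n) P) (hY : AEMeasurable Y P)
    (h : ∀ᵐ ω ∂P, Tendsto (S · ω) atTop (𝓝 (Y ω))) (t : E) :
    Tendsto (fun n => charFun (P.map (S n)) t) atTop (𝓝 (charFun (P.map Y) t)) := by
  have hcont : Continuous fun x : E => exp (⟪x, t⟫ * I) := by fun_prop
  simp only [charFun_apply, integral_map hY hcont.aestronglyMeasurable,
    integral_map (hS _) hcont.aestronglyMeasurable]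
  refine tendsto_integral_of_dominated_convergence 1
    (fun n => hcont.comp_aestronglyMeasurable (hS n).aestronglyMeasurable) (integrable_const 1)
    (fun n => .of_forall fun ω => (norm_exp_ofReal_mul_I _).le) ?_
  filter_upwards [h] with ω hω
  exact (hcont.tendsto _).comp hω

lemma charFun_map_sum_smul {μ : Measure E} {X : ℕ → Ω → E} (hX : ∀ j, Measurable (X j))
    (hlaw : ∀ j, HasLaw (X j) μ P) (hindep : iIndepFun X P) (a : ℕ → ℝ)
    (n : ℕ) (t : E) :
    charFun (P.map fun ω => ∑ j ∈ Finset.range n, a j • X j ω) t =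
      ∏ j ∈ Finset.range n, charFun μ (a j • t) := by
  have hind : iIndepFun (fun j ω => a j • X j ω) P :=
    hindep.comp _ fun j => measurable_const_smul (a j)
  rw [congrFun (iIndepFun.charFun_map_fun_finsetSum_eq_prod (X := fun j ω => a j • X j ω)
    (fun j _ => ((hX j).const_smul (a j)).aemeasurable) (hind.restrict _)) t, Finset.prod_apply]
  refine Finset.prod_congr rfl fun j _ => ?_
  have hmap : P.map (fun ω => a j • X j ω) = μ.map (a j • ·) := by
    rw [← (hlaw j).map_eq, Measure.map_map (measurable_const_smul _) (hX j)]
    rfl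
  rw [hmap, charFun_map_smul]

theorem exists_isProbabilityMeasure_norm_charFun_le_prod [CompleteSpace E] (μ : Measure E)
    [IsProbabilityMeasure μ] (hμ : ∀ᵐ x ∂μ, ‖x‖ ≤ 1) {a : ℕ → ℝ} (ha0 : ∀ j, 0 ≤ a j)
    (ha : HasSum a 1) :
    ∃ ν : Measure E, IsProbabilityMeasure ν ∧ (∀ᵐ x ∂ν, ‖x‖ ≤ 1) ∧
      ∀ t n, ‖charFun ν t‖ ≤ ∏ j ∈ Finset.range n, ‖charFun μ (a j • t)‖ := by
  obtain ⟨Ω, _, P, X, hX, hlaw, hindep, _⟩ := exists_iid ℕ μ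
  let S (n : ℕ) (ω : Ω) : E := ∑ j ∈ Finset.range n, a j • X j ω
  let Y (ω : Ω) : E := ∑' j, a j • X j ω
  have hS (n : ℕ) : AEMeasurable (S n) P :=
    (Finset.measurable_sum _ fun j _ => (hX j).const_smul (a j)).aemeasurable
  have hbound : ∀ᵐ ω ∂P, ∀ j, ‖a j • X j ω‖ ≤ a j := by
    refine ae_all_iff.2 fun j => ?_
    rw [← (hlaw j).map_eq] at hμ
    filter_upwards [ae_of_ae_map (hX j).aemeasurable hμ] with ω hω
    rw [norm_smul, Real.norm_of_nonneg (ha0 j)]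
    exact mul_le_of_le_one_right (ha0 j) hω
  have hSY : ∀ᵐ ω ∂P, Tendsto (S · ω) atTop (𝓝 (Y ω)) := by
    filter_upwards [hbound] with ω hω
    exact (ha.summable.of_norm_bounded hω).hasSum.tendsto_sum_nat
  have hY : AEMeasurable Y P := aemeasurable_of_tendsto_metrizable_ae' hS hSY
  refine ⟨P.map Y, Measure.isProbabilityMeasure_map hY, ?_, fun t n => ?_⟩
  · rw [ae_map_iff hY (measurableSet_le measurable_norm measurable_const)]
    filter_upwards [hbound] with ω hω
    exact tsum_of_norm_bounded ha hω
  · refine le_of_tendsto (tendsto_charFun_map_of_ae_tendsto hS hY hSY t).norm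
      (eventually_atTop.2 ⟨n, fun m hnm => ?_⟩)
    rw [charFun_map_sum_smul hX hlaw hindep, norm_prod]
    exact Finset.prod_le_prod_of_subset_of_le_one (Finset.range_mono hnm)
      (fun j _ => norm_nonneg _) fun j _ _ => norm_charFun_le_one _

lemma exists_prod_le_mul_exp {V : Type*} [SeminormedAddCommGroup V] [NormedSpace ℝ V]
    {F : V → ℝ} (hF0 : ∀ t, 0 ≤ F t) {A : ℝ} (hA : 0 < A) (hF : ∀ t, ‖t‖ * F t ≤ A) {p : ℝ}
    (hp : 0 < p) {δ : ℝ} (hδ : 0 < δ) (t : V) :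
    ∃ n, ∏ j ∈ Finset.range n, F ((δ * ((j + 1 : ℕ) ^ p⁻¹ : ℝ)⁻¹) • t) ≤
      Real.exp 1 * Real.exp (-(δ / (Real.exp 1 * A)) ^ p * ‖t‖ ^ p) := by
  -- `⌊y⌋` is the number of factors that are at most `exp (-1)`.
  let y := (δ / (Real.exp 1 * A) * ‖t‖) ^ p
  have hy : 0 ≤ y := by positivity
  have hfactor {j : ℕ} (hj : j < ⌊y⌋₊) :
      F ((δ * ((j + 1 : ℕ) ^ p⁻¹ : ℝ)⁻¹) • t) ≤ Real.exp (-1) := by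
    have hjy : ((j + 1 : ℕ) : ℝ) ^ p⁻¹ ≤ δ / (Real.exp 1 * A) * ‖t‖ := by
      rw [Real.rpow_inv_le_iff_of_pos (by positivity) (by positivity) hp]
      exact (Nat.cast_le.2 hj).trans (Nat.floor_le hy)
    have hlarge : Real.exp 1 * A ≤ ‖(δ * ((j + 1 : ℕ) ^ p⁻¹ : ℝ)⁻¹) • t‖ := by
      rw [div_mul_eq_mul_div, le_div_iff₀ (by positivity), mul_comm] at hjy
      rw [norm_smul, Real.norm_of_nonneg (by positivity), mul_right_comm]
      exact (le_mul_inv_iff₀ (by positivity)).2 hjy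
    have hle := (mul_le_mul_of_nonneg_right hlarge (hF0 _)).trans (hF _)
    rw [mul_right_comm, mul_le_iff_le_one_left hA] at hle
    simpa only [Real.exp_neg, mul_one] using (le_inv_mul_iff₀ (Real.exp_pos 1)).2 hle
  refine ⟨⌊y⌋₊, ?_⟩
  calc ∏ j ∈ Finset.range ⌊y⌋₊, F ((δ * ((j + 1 : ℕ) ^ p⁻¹ : ℝ)⁻¹) • t)
      ≤ ∏ _j ∈ Finset.range ⌊y⌋₊, Real.exp (-1) :=
        Finset.prod_le_prod (fun _ _ => hF0 _) fun j hj => hfactor (Finset.mem_range.1 hj)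
    _ = Real.exp (-⌊y⌋₊) := by
        rw [Finset.prod_const, Finset.card_range, ← Real.exp_nat_mul, mul_neg_one]
    _ ≤ Real.exp (1 + -y) := by
        gcongr
        linarith [Nat.lt_floor_add_one y]
    _ = Real.exp 1 * Real.exp (-(δ / (Real.exp 1 * A)) ^ p * ‖t‖ ^ p) := by
        rw [Real.exp_add, neg_mul, ← Real.mul_rpow (by positivity) (norm_nonneg t)]

theorem exists_isProbabilityMeasure_norm_charFun_le_exp (E : Type*) [NormedAddCommGroup E]
    [InnerProductSpace ℝ E] [MeasurableSpace E] [BorelSpace E] [FiniteDimensional ℝ E] {p : ℝ}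
    (hp0 : 0 < p) (hp1 : p < 1) :
    ∃ ν : Measure E, IsProbabilityMeasure ν ∧ (∀ᵐ x ∂ν, ‖x‖ ≤ 1) ∧
      ∃ C c, 0 < c ∧ ∀ t, ‖charFun ν t‖ ≤ C * Real.exp (-c * ‖t‖ ^ p) := by
  obtain ⟨μ, _, hμ, A, hA, hdecay⟩ := exists_isProbabilityMeasure_norm_mul_norm_charFun_le E
  let w (j : ℕ) : ℝ := ((j + 1 : ℕ) ^ p⁻¹ : ℝ)⁻¹
  have hw0 (j : ℕ) : 0 < w j := by positivity
  have hw : Summable w :=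
    (summable_nat_add_iff 1).2 (Real.summable_nat_rpow_inv.2 ((one_lt_inv₀ hp0).2 hp1))
  have hsum : 0 < ∑' j, w j := hw.tsum_pos (fun j => (hw0 j).le) 0 (hw0 0)
  let δ := (∑' j, w j)⁻¹
  have hδ : 0 < δ := inv_pos.2 hsum
  have hsum_one : HasSum (fun j => δ * w j) 1 := by
    simpa only [δ, inv_mul_cancel₀ hsum.ne'] using hw.hasSum.mul_left δ
  obtain ⟨ν, hν, hsupp, hprod⟩ := exists_isProbabilityMeasure_norm_charFun_le_prod μ hμ
    (fun j => (mul_pos hδ (hw0 j)).le) hsum_one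
  refine ⟨ν, hν, hsupp, Real.exp 1, (δ / (Real.exp 1 * A)) ^ p, by positivity, fun t => ?_⟩
  obtain ⟨n, hn⟩ := exists_prod_le_mul_exp (fun _ => norm_nonneg _) hA hdecay hp0 hδ t
  exact (hprod t n).trans hn

end RandomSeries

/-! ### Cutoffs -/

lemma FT_integral_sub {b : ℝᵈ → ℂ} (hbc : Continuous b) (hb : Integrable b) (ν : Measure ℝᵈ)
    [IsFiniteMeasure ν] (ξ : ℝᵈ) :
    FT (fun x => ∫ y, b (x - y) ∂ν) ξ = charFun ν (-ξ) * FT b ξ := by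
  let e (x : ℝᵈ) : ℂ := exp (-(⟪x, ξ⟫ : ℝ) * I)
  have he (x : ℝᵈ) : ‖e x‖ ≤ 1 := by
    rw [show e x = exp ((-⟪x, ξ⟫ : ℝ) * I) by simp only [e, ofReal_neg], norm_exp_ofReal_mul_I]
  have hint : Integrable (fun z : ℝᵈ × ℝᵈ => b (z.1 - z.2)) (volume.prod ν) := by
    refine (integrable_prod_iff' (by fun_prop)).2 ⟨.of_forall fun y => hb.comp_sub_right y, ?_⟩
    simp only [integral_sub_right_eq_self fun x => ‖b x‖]
    exact integrable_const _
  have hint' : Integrable (fun z : ℝᵈ × ℝᵈ => b (z.1 - z.2) * e z.1) (volume.prod ν) :=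
    hint.mul_bdd (c := 1) (by fun_prop) (.of_forall fun z => he z.1)
  calc FT (fun x => ∫ y, b (x - y) ∂ν) ξ
      = fourierFactor d * ∫ x, ∫ y, b (x - y) * e x ∂ν := by
        simp only [integral_mul_const]
        rfl
    _ = ∫ y, FT (fun x => b (-y + x)) ξ ∂ν := by
        rw [integral_integral_swap hint', ← integral_const_mul]
        simp only [neg_add_eq_sub]
        rfl
    _ = charFun ν (-ξ) * FT b ξ := by
        simp only [FT_comp_add, integral_mul_const, charFun_apply, inner_neg_left, inner_neg_right]

lemma isSCutoff_of_norm_FT_le {s : ℝ} (hs : 0 < s) {χ : ℝᵈ → ℂ} (hχ : Continuous χ)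
    (hsupp : HasCompactSupport χ) {C c p : ℝ} (hc : 0 < c) (hp : 1 / s < p)
    (h : ∀ ξ, ‖FT χ ξ‖ ≤ C * Real.exp (-c * ‖ξ‖ ^ p)) : IsSCutoff s χ := by
  have hs0 : 0 < 1 / s := one_div_pos.2 hs
  refine ⟨contDiff_of_norm_FT_le hχ (hχ.integrable_of_hasCompactSupport hsupp) hc
    (hs0.trans hp) h, hsupp, fun N hN => ?_⟩
  obtain ⟨K, hK⟩ := exists_mul_rpow_le_mul_rpow_add hs0.le hp hc hN.le
  refine ⟨max C 1 * Real.exp K, by positivity, fun ξ => (h ξ).trans ?_⟩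
  rw [mul_assoc, ← Real.exp_add]
  gcongr
  · exact le_max_left C 1
  · linarith [hK ‖ξ‖ (norm_nonneg ξ)]

lemma integral_sub_eq_of_eq_on_closedBall {ν : Measure ℝᵈ} [IsProbabilityMeasure ν] {r : ℝ}
    (hν : ∀ᵐ y ∂ν, ‖y‖ ≤ r) {b : ℝᵈ → ℂ} {a : ℂ} {x : ℝᵈ} (h : ∀ z, ‖x - z‖ ≤ r → b z = a) :
    ∫ y, b (x - y) ∂ν = a := by
  have hba : (fun y => b (x - y)) =ᵐ[ν] fun _ => a := by
    filter_upwards [hν] with y hy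
    exact h _ (by rwa [sub_sub_cancel])
  rw [integral_congr_ae hba, integral_const, probReal_univ, one_smul]

lemma norm_FT_integral_sub_le {b : ℝᵈ → ℂ} (hbc : Continuous b) (hb : Integrable b)
    (ν : Measure ℝᵈ) [IsFiniteMeasure ν] (ξ : ℝᵈ) :
    ‖FT (fun x => ∫ y, b (x - y) ∂ν) ξ‖ ≤
      (fourierFactor d * ∫ x, ‖b x‖) * ‖charFun ν (-ξ)‖ := by
  rw [FT_integral_sub hbc hb, norm_mul, mul_comm]
  gcongr
  exact norm_FT_le b ξ

theorem exists_isSCutoff_eq_one {s : ℝ} (hs : 1 < s) :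
    ∃ χ : ℝᵈ → ℂ, IsSCutoff s χ ∧ (∀ x, ‖x‖ ≤ 1 → χ x = 1) ∧ ∀ x, 4 ≤ ‖x‖ → χ x = 0 := by
  have hs0 : 0 < s := zero_lt_one.trans hs
  obtain ⟨p, hsp, hp1⟩ := exists_between ((div_lt_one hs0).2 hs)
  obtain ⟨ν, _, hν, C, c, hc, hdecay⟩ :=
    exists_isProbabilityMeasure_norm_charFun_le_exp ℝᵈ ((one_div_pos.2 hs0).trans hsp) hp1
  let b : ContDiffBump (0 : ℝᵈ) := ⟨2, 3, by norm_num, by norm_num⟩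
  let bc (x : ℝᵈ) : ℂ := b x
  have hbc : Continuous bc := continuous_ofReal.comp b.continuous
  have hb : Integrable bc := b.integrable.ofReal
  let χ (x : ℝᵈ) : ℂ := ∫ y, bc (x - y) ∂ν
  have hχ : Continuous χ := by
    refine continuous_of_dominated (bound := 1) (fun x => by fun_prop) (fun x => ?_)
      (integrable_const 1) (.of_forall fun y => by fun_prop)
    exact .of_forall fun y => by simpa [bc, abs_of_nonneg b.nonneg] using b.le_one
  have hχ_one (x : ℝᵈ) (hx : ‖x‖ ≤ 1) : χ x = 1 :=
    integral_sub_eq_of_eq_on_closedBall hν fun z hz => ofReal_eq_one.2 <|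
      b.one_of_mem_closedBall <| mem_closedBall_zero_iff.2 <|
        by linarith [norm_le_norm_add_norm_sub x z]
  have hχ_zero (x : ℝᵈ) (hx : 4 ≤ ‖x‖) : χ x = 0 :=
    integral_sub_eq_of_eq_on_closedBall hν fun z hz => ofReal_eq_zero.2 <|
      b.zero_of_le_dist <| by
        rw [dist_zero_right]
        linarith [norm_sub_norm_le x z]
  have hsupp : HasCompactSupport χ := .intro (isCompact_closedBall 0 4) fun x hx =>
    hχ_zero x (lt_of_not_ge (mt mem_closedBall_zero_iff.2 hx)).le
  have hFT (ξ : ℝᵈ) :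
      ‖FT χ ξ‖ ≤ (fourierFactor d * (∫ x, ‖bc x‖) * C) * Real.exp (-c * ‖ξ‖ ^ p) := by
    have hfactor := (fourierFactor_pos d).le
    refine (norm_FT_integral_sub_le hbc hb ν ξ).trans ?_
    rw [mul_assoc _ C]
    gcongr
    simpa only [norm_neg] using hdecay (-ξ)
  exact ⟨χ, isSCutoff_of_norm_FT_le hs0 hχ hsupp hc hsp hFT, hχ_one, hχ_zero⟩

namespace IsSCutoff

variable {s : ℝ} {φ : EuclideanSpace ℝ (Fin d) → ℂ}

lemma continuous (hφ : IsSCutoff s φ) : Continuous φ := hφ.1.continuous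

lemma integrable (hφ : IsSCutoff s φ) : Integrable φ :=
  hφ.continuous.integrable_of_hasCompactSupport hφ.2.1

lemma const_mul (hφ : IsSCutoff s φ) (a : ℂ) : IsSCutoff s fun x => a * φ x := by
  refine ⟨contDiff_const.mul hφ.1, hφ.2.1.mul_left, fun N hN => ?_⟩
  obtain ⟨C, hC, hdecay⟩ := hφ.2.2 N hN
  refine ⟨(‖a‖ + 1) * C, by positivity, fun ξ => ?_⟩
  rw [FT_const_mul, norm_mul, mul_assoc]
  gcongr
  · exact (lt_add_one _).le
  · exact hdecay ξ

lemma comp_add_smul (hφ : IsSCutoff s φ) (a : ℝᵈ) {r : ℝ} (hr : r ≠ 0) :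
    IsSCutoff s fun x => φ (a + r • x) := by
  have hr0 : 0 < |r| := abs_pos.2 hr
  refine ⟨hφ.1.comp (by fun_prop), ?_, fun N hN => ?_⟩
  · exact hφ.2.1.comp_homeomorph ((Homeomorph.smulOfNeZero r hr).trans (Homeomorph.addLeft a))
  obtain ⟨C, hC, hdecay⟩ := hφ.2.2 (N * |r| ^ (1 / s)) (by positivity)
  refine ⟨(|r| ^ d)⁻¹ * C, by positivity, fun ξ => ?_⟩
  rw [norm_FT_comp_add_smul φ a hr, mul_assoc]
  gcongr
  refine (hdecay _).trans_eq ?_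
  rw [norm_smul, norm_inv, Real.norm_eq_abs, neg_mul, mul_assoc, ← Real.mul_rpow hr0.le
    (by positivity), mul_inv_cancel_left₀ hr0.ne', neg_mul]

end IsSCutoff

/-! ### Local division -/

lemma tendsto_FT_of_dominated {ι : Type*} {l : Filter ι} [l.IsCountablyGenerated]
    {F : ι → ℝᵈ → ℂ} {f : ℝᵈ → ℂ} {B : ℝᵈ → ℝ} (hF : ∀ᶠ i in l, AEStronglyMeasurable (F i))
    (hB : Integrable B) (hle : ∀ᶠ i in l, ∀ x, ‖F i x‖ ≤ B x)
    (hlim : ∀ x, Tendsto (F · x) l (𝓝 (f x))) (ξ : ℝᵈ) :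
    Tendsto (fun i => FT (F i) ξ) l (𝓝 (FT f ξ)) := by
  refine (tendsto_integral_filter_of_dominated_convergence B ?_ ?_ hB ?_).const_mul _
  · filter_upwards [hF] with i hi
    fun_prop
  · filter_upwards [hle] with i hi
    refine .of_forall fun x => ?_
    rw [norm_mul, ← ofReal_neg, norm_exp_ofReal_mul_I, mul_one]
    exact hi x
  · exact .of_forall fun x => (hlim x).mul_const _

/-- The weighted Fourier algebra (Beurling algebra) in which cutoffs are locally inverted:
continuous integrable functions whose Fourier transform is integrable against
`exp (ε * ‖ξ‖ ^ p)`. -/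
structure MemBeurling (ε p : ℝ) (g : ℝᵈ → ℂ) : Prop where
  continuous : Continuous g
  integrable : Integrable g
  integrable_FT_mul_exp : Integrable fun ξ => ‖FT g ξ‖ * Real.exp (ε * ‖ξ‖ ^ p)

/-- The norm of the Beurling algebra `MemBeurling ε p`, normalized so that it dominates the
supremum norm and is submultiplicative. -/
def beurlingNorm (ε p : ℝ) (g : ℝᵈ → ℂ) : ℝ :=
  fourierFactor d * ∫ ξ, ‖FT g ξ‖ * Real.exp (ε * ‖ξ‖ ^ p)

lemma mul_exp_le_of_le_mul_exp {a C c ε t : ℝ} (h : a ≤ C * Real.exp (-c * t)) :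
    a * Real.exp (ε * t) ≤ C * Real.exp (-(c - ε) * t) := by
  refine (mul_le_mul_of_nonneg_right h (Real.exp_pos _).le).trans_eq ?_
  rw [mul_assoc, ← Real.exp_add]
  ring_nf

lemma memBeurling_of_norm_FT_le {g : ℝᵈ → ℂ} (hgc : Continuous g) (hg : Integrable g)
    {C c ε p : ℝ} (hp : 0 < p) (hε : ε < c)
    (h : ∀ ξ, ‖FT g ξ‖ ≤ C * Real.exp (-c * ‖ξ‖ ^ p)) : MemBeurling ε p g := by
  refine ⟨hgc, hg, ?_⟩
  refine ((integrable_exp_neg_mul_norm_rpow volume (sub_pos.2 hε) hp).const_mul C).mono'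
    ?_ (.of_forall fun ξ => ?_)
  · have := continuous_FT hg
    fun_prop (disch := exact hp.le)
  · rw [Real.norm_of_nonneg (by positivity)]
    exact mul_exp_le_of_le_mul_exp (h ξ)

lemma IsSCutoff.memBeurling {s : ℝ} {φ : ℝᵈ → ℂ} (hφ : IsSCutoff s φ) (hs : 0 < s) (ε : ℝ) :
    MemBeurling ε (1 / s) φ := by
  obtain ⟨C, _, h⟩ := hφ.2.2 (|ε| + 1) (by positivity)
  exact memBeurling_of_norm_FT_le hφ.continuous hφ.integrable (one_div_pos.2 hs)
    ((le_abs_self ε).trans_lt (lt_add_one _)) h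

lemma norm_FT_comp_add_smul_mul_exp_le {ε p : ℝ} (hε : 0 ≤ ε) (hp : 0 ≤ p) (g : ℝᵈ → ℂ) (a : ℝᵈ)
    {r : ℝ} (hr : 0 < r) (hr1 : r ≤ 1) (ξ : ℝᵈ) :
    ‖FT (fun x => g (a + r • x)) ξ‖ * Real.exp (ε * ‖ξ‖ ^ p) ≤
      (r ^ d)⁻¹ * (‖FT g (r⁻¹ • ξ)‖ * Real.exp (ε * ‖r⁻¹ • ξ‖ ^ p)) := by
  rw [norm_FT_comp_add_smul g a hr.ne', abs_of_pos hr, mul_assoc]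
  gcongr
  rw [norm_smul, norm_inv, Real.norm_of_nonneg hr.le]
  exact le_mul_of_one_le_left (norm_nonneg ξ) ((one_le_inv₀ hr).2 hr1)

namespace MemBeurling

variable {ε p : ℝ} {g : EuclideanSpace ℝ (Fin d) → ℂ}

lemma integrable_FT (hg : MemBeurling ε p g) (hε : 0 ≤ ε) : Integrable (FT g) := by
  refine hg.integrable_FT_mul_exp.mono' (continuous_FT hg.integrable).aestronglyMeasurable
    (.of_forall fun ξ => ?_)
  exact le_mul_of_one_le_right (norm_nonneg _) (Real.one_le_exp (by positivity))

lemma norm_le (hg : MemBeurling ε p g) (hε : 0 ≤ ε) (x : ℝᵈ) : ‖g x‖ ≤ beurlingNorm ε p g := by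
  have hF := hg.integrable_FT hε
  rw [← neg_neg x, ← FT_FT hg.continuous hg.integrable hF]
  refine (norm_FT_le _ _).trans ?_
  have hfactor := (fourierFactor_pos d).le
  unfold beurlingNorm
  gcongr ?_ * ?_
  refine integral_mono hF.norm hg.integrable_FT_mul_exp fun ξ => ?_
  exact le_mul_of_one_le_right (norm_nonneg _) (Real.one_le_exp (by positivity))

lemma norm_FT_mul_le (hg : MemBeurling ε p g) (hε : 0 ≤ ε) (hp : 0 ≤ p) (hp1 : p ≤ 1)
    {u : ℝᵈ → ℂ} (hu : Integrable u) {C : ℝ}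
    (h : ∀ ξ, ‖FT u ξ‖ ≤ C * Real.exp (-ε * ‖ξ‖ ^ p)) (ξ : ℝᵈ) :
    ‖FT (fun x => g x * u x) ξ‖ ≤ beurlingNorm ε p g * C * Real.exp (-ε * ‖ξ‖ ^ p) := by
  have hC : 0 ≤ C := nonneg_of_mul_nonneg_left ((norm_nonneg _).trans (h 0)) (Real.exp_pos _)
  have hle (η : ℝᵈ) : ‖FT g η‖ * ‖FT u (ξ - η)‖ ≤
      ‖FT g η‖ * Real.exp (ε * ‖η‖ ^ p) * (C * Real.exp (-ε * ‖ξ‖ ^ p)) := by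
    rw [mul_assoc, mul_left_comm _ C, ← Real.exp_add]
    gcongr
    refine (h _).trans ?_
    gcongr
    nlinarith [norm_rpow_le_norm_sub_rpow_add hp hp1 ξ η]
  refine (Paper.norm_FT_mul_le hg.continuous hg.integrable (hg.integrable_FT hε) hu
    (hg.integrable_FT_mul_exp.mul_const _) hle).trans_eq ?_
  rw [integral_mul_const, beurlingNorm, mul_assoc, mul_assoc]

lemma comp_add_smul (hg : MemBeurling ε p g) (hε : 0 ≤ ε) (hp : 0 ≤ p) (a : ℝᵈ) {r : ℝ}
    (hr : 0 < r) (hr1 : r ≤ 1) : MemBeurling ε p fun x => g (a + r • x) := by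
  have hgr : Integrable fun x => g (a + r • x) :=
    (hg.integrable.comp_add_left a).comp_smul hr.ne'
  refine ⟨hg.continuous.comp (by fun_prop), hgr, ?_⟩
  refine ((hg.integrable_FT_mul_exp.comp_smul (inv_ne_zero hr.ne')).const_mul
    (r ^ d)⁻¹).mono' ?_ (.of_forall fun ξ => ?_)
  · have := continuous_FT hgr
    fun_prop (disch := exact hp)
  · rw [Real.norm_of_nonneg (by positivity)]
    exact norm_FT_comp_add_smul_mul_exp_le hε hp g a hr hr1 ξ

lemma beurlingNorm_comp_add_smul_le (hg : MemBeurling ε p g) (hε : 0 ≤ ε) (hp : 0 ≤ p) (a : ℝᵈ)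
    {r : ℝ} (hr : 0 < r) (hr1 : r ≤ 1) :
    beurlingNorm ε p (fun x => g (a + r • x)) ≤ beurlingNorm ε p g := by
  refine mul_le_mul_of_nonneg_left ?_ (fourierFactor_pos d).le
  calc ∫ ξ, ‖FT (fun x => g (a + r • x)) ξ‖ * Real.exp (ε * ‖ξ‖ ^ p)
      ≤ ∫ ξ, (r ^ d)⁻¹ * (‖FT g (r⁻¹ • ξ)‖ * Real.exp (ε * ‖r⁻¹ • ξ‖ ^ p)) :=
        integral_mono (hg.comp_add_smul hε hp a hr hr1).integrable_FT_mul_exp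
          ((hg.integrable_FT_mul_exp.comp_smul (inv_ne_zero hr.ne')).const_mul _)
          (norm_FT_comp_add_smul_mul_exp_le hε hp g a hr hr1)
    _ = ∫ ξ, ‖FT g ξ‖ * Real.exp (ε * ‖ξ‖ ^ p) := by
        rw [integral_const_mul, Measure.integral_comp_inv_smul_of_nonneg volume
          (fun ξ => ‖FT g ξ‖ * Real.exp (ε * ‖ξ‖ ^ p)) hr.le, finrank_euclideanSpace_fin,
          smul_eq_mul, inv_mul_cancel_left₀ (by positivity)]

end MemBeurling

section Freezing

variable {s : ℝ} {φ χ : EuclideanSpace ℝ (Fin d) → ℂ}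

lemma IsSCutoff.integrable_sub_comp_add_smul_mul (hφ : IsSCutoff s φ) (hχ : IsSCutoff s χ)
    (x₀ : ℝᵈ) (r : ℝ) : Integrable fun x => (φ x₀ - φ (x₀ + r • x)) * χ x := by
  have hφc := hφ.continuous
  have hχc := hχ.continuous
  exact Continuous.integrable_of_hasCompactSupport (by fun_prop) hχ.2.1.mul_left

lemma exists_norm_FT_sub_comp_add_smul_mul_le (hs : 1 ≤ s) (hφ : IsSCutoff s φ)
    (hχ : IsSCutoff s χ) (x₀ : ℝᵈ) {N : ℝ} (hN : 0 < N) :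
    ∃ K, ∀ r : ℝ, 0 < r → r ≤ 1 → ∀ ξ, ‖FT (fun x => (φ x₀ - φ (x₀ + r • x)) * χ x) ξ‖ ≤
      K * Real.exp (-N * ‖ξ‖ ^ (1 / s)) := by
  have hs0 : 0 < s := zero_lt_one.trans_le hs
  obtain ⟨C, hC, hχ_le⟩ := hχ.2.2 N hN
  refine ⟨‖φ x₀‖ * C + beurlingNorm N (1 / s) φ * C, fun r hr hr1 ξ => ?_⟩
  have hmem := hφ.memBeurling hs0 N
  have hmem_r := hmem.comp_add_smul hN.le (by positivity) x₀ hr hr1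
  have hint : Integrable fun x => φ (x₀ + r • x) * χ x :=
    hχ.integrable.bdd_mul hmem_r.continuous.aestronglyMeasurable
      (.of_forall (hmem_r.norm_le hN.le))
  simp only [sub_mul]
  rw [FT_sub (hχ.integrable.const_mul _) hint, FT_const_mul, add_mul]
  refine (norm_sub_le _ _).trans (add_le_add ?_ ?_)
  · rw [norm_mul, mul_assoc]
    gcongr
    exact hχ_le ξ
  · refine (hmem_r.norm_FT_mul_le hN.le (by positivity) ((div_le_one hs0).2 hs)
      hχ.integrable hχ_le ξ).trans ?_
    gcongr
    exact hmem.beurlingNorm_comp_add_smul_le hN.le (by positivity) x₀ hr hr1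

theorem tendsto_beurlingNorm_sub_comp_add_smul_mul (hs : 1 ≤ s) (hφ : IsSCutoff s φ)
    (hχ : IsSCutoff s χ) (x₀ : ℝᵈ) (ε : ℝ) :
    Tendsto (fun r : ℝ => beurlingNorm ε (1 / s) fun x => (φ x₀ - φ (x₀ + r • x)) * χ x)
      (𝓝[>] 0) (𝓝 0) := by
  have hs0 : 0 < s := zero_lt_one.trans_le hs
  have hpoint (ξ : ℝᵈ) :
      Tendsto (fun r : ℝ => FT (fun x => (φ x₀ - φ (x₀ + r • x)) * χ x) ξ) (𝓝[>] 0) (𝓝 0) := by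
    have hφc := hφ.continuous
    have hφ_le := (hφ.memBeurling hs0 1).norm_le zero_le_one
    have hzero : FT (fun _ : ℝᵈ => 0) ξ = 0 := by simp [FT]
    rw [← hzero]
    refine tendsto_FT_of_dominated
      (B := fun x => (beurlingNorm 1 (1 / s) φ + beurlingNorm 1 (1 / s) φ) * ‖χ x‖)
      (.of_forall fun r => (hφ.integrable_sub_comp_add_smul_mul hχ x₀ r).aestronglyMeasurable)
      (hχ.integrable.norm.const_mul _) (.of_forall fun r x => ?_) (fun x => ?_) ξ
    · rw [norm_mul]
      gcongr
      exact (norm_sub_le _ _).trans (add_le_add (hφ_le _) (hφ_le _))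
    · exact tendsto_nhdsWithin_of_tendsto_nhds (Continuous.tendsto' (by fun_prop) _ _ (by simp))
  obtain ⟨N, hN⟩ := exists_gt (max 0 ε)
  obtain ⟨hN0, hεN⟩ := max_lt_iff.1 hN
  obtain ⟨K, hK⟩ := exists_norm_FT_sub_comp_add_smul_mul_le hs hφ hχ x₀ hN0
  have hlim : Tendsto (fun r : ℝ => ∫ ξ, ‖FT (fun x => (φ x₀ - φ (x₀ + r • x)) * χ x) ξ‖ *
      Real.exp (ε * ‖ξ‖ ^ (1 / s))) (𝓝[>] 0) (𝓝 (∫ _ξ : ℝᵈ, (0 : ℝ))) := by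
    refine tendsto_integral_filter_of_dominated_convergence
      (fun ξ => K * Real.exp (-(N - ε) * ‖ξ‖ ^ (1 / s))) ?_ ?_
      ((integrable_exp_neg_mul_norm_rpow volume (sub_pos.2 hεN) (by positivity)).const_mul K)
      (.of_forall fun ξ => ?_)
    · refine .of_forall fun r => ?_
      have := continuous_FT (hφ.integrable_sub_comp_add_smul_mul hχ x₀ r)
      fun_prop (disch := positivity)
    · filter_upwards [Ioc_mem_nhdsGT zero_lt_one] with r hr
      refine .of_forall fun ξ => ?_
      rw [Real.norm_of_nonneg (by positivity)]
      exact mul_exp_le_of_le_mul_exp (hK r hr.1 hr.2 ξ)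
    · simpa only [norm_zero, zero_mul] using
        (hpoint ξ).norm.mul_const (Real.exp (ε * ‖ξ‖ ^ (1 / s)))
  simpa only [beurlingNorm, integral_zero, mul_zero] using hlim.const_mul (fourierFactor d)

end Freezing

section Neumann

lemma norm_geom_sum_le_inv_one_sub {z : ℂ} {A : ℝ} (hz : ‖z‖ ≤ A) (hA : A < 1) (n : ℕ) :
    ‖∑ i ∈ Finset.range n, z ^ i‖ ≤ (1 - A)⁻¹ := by
  have hA0 : 0 ≤ A := (norm_nonneg z).trans hz
  calc ‖∑ i ∈ Finset.range n, z ^ i‖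
      ≤ ∑ i ∈ Finset.range n, A ^ i := by
        refine norm_sum_le_of_le _ fun i _ => ?_
        rw [norm_pow]
        gcongr
    _ ≤ ∑' i, A ^ i :=
        (summable_geometric_of_lt_one hA0 hA).sum_le_tsum _ fun i _ => by positivity
    _ = (1 - A)⁻¹ := tsum_geometric_of_lt_one hA0 hA

namespace MemBeurling

variable {ε p C : ℝ} {h v : EuclideanSpace ℝ (Fin d) → ℂ}

lemma integrable_geom_sum_mul (hh : MemBeurling ε p h) (hε : 0 ≤ ε)
    (hnorm : beurlingNorm ε p h < 1) (hv : Integrable v) (n : ℕ) :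
    Integrable fun x => (∑ i ∈ Finset.range n, h x ^ i) * v x := by
  have hhc := hh.continuous
  exact hv.bdd_mul (Continuous.aestronglyMeasurable (by fun_prop))
    (.of_forall fun x => norm_geom_sum_le_inv_one_sub (hh.norm_le hε x) hnorm n)

lemma norm_FT_geom_sum_mul_le (hh : MemBeurling ε p h) (hε : 0 ≤ ε) (hp : 0 ≤ p) (hp1 : p ≤ 1)
    (hnorm : beurlingNorm ε p h < 1) (hv : Integrable v)
    (hvC : ∀ ξ, ‖FT v ξ‖ ≤ C * Real.exp (-ε * ‖ξ‖ ^ p)) (n : ℕ) (ξ : ℝᵈ) :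
    ‖FT (fun x => (∑ i ∈ Finset.range n, h x ^ i) * v x) ξ‖ ≤
      C / (1 - beurlingNorm ε p h) * Real.exp (-ε * ‖ξ‖ ^ p) := by
  have hgap := sub_pos.2 hnorm
  induction n generalizing ξ with
  | zero =>
    have hC : 0 ≤ C := nonneg_of_mul_nonneg_left ((norm_nonneg _).trans (hvC 0)) (Real.exp_pos _)
    have hzero : FT (fun _ : ℝᵈ => 0) ξ = 0 := by simp [FT]
    simp only [Finset.range_zero, Finset.sum_empty, zero_mul, hzero, norm_zero]
    positivity
  | succ n ih =>
    set w : ℝᵈ → ℂ := fun x => (∑ i ∈ Finset.range n, h x ^ i) * v x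
    have hw : Integrable w := hh.integrable_geom_sum_mul hε hnorm hv n
    have hhw : Integrable fun x => h x * w x :=
      hw.bdd_mul hh.continuous.aestronglyMeasurable (.of_forall (hh.norm_le hε))
    have hsucc : (fun x => (∑ i ∈ Finset.range (n + 1), h x ^ i) * v x) =
        fun x => h x * w x + v x := by
      ext x
      rw [geom_sum_succ, add_mul, one_mul, mul_assoc]
    rw [hsucc, FT_add hhw hv]
    refine (norm_add_le_of_le (hh.norm_FT_mul_le hε hp hp1 hw ih ξ) (hvC ξ)).trans_eq ?_
    field_simp
    ring

theorem norm_FT_div_one_sub_le (hh : MemBeurling ε p h) (hε : 0 ≤ ε) (hp : 0 ≤ p)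
    (hp1 : p ≤ 1) (hnorm : beurlingNorm ε p h < 1) (hv : Integrable v)
    (hvC : ∀ ξ, ‖FT v ξ‖ ≤ C * Real.exp (-ε * ‖ξ‖ ^ p)) (ξ : ℝᵈ) :
    ‖FT (fun x => v x / (1 - h x)) ξ‖ ≤
      C / (1 - beurlingNorm ε p h) * Real.exp (-ε * ‖ξ‖ ^ p) := by
  refine le_of_tendsto (tendsto_FT_of_dominated (l := atTop)
    (.of_forall fun n => (hh.integrable_geom_sum_mul hε hnorm hv n).aestronglyMeasurable)
    (hv.norm.const_mul (1 - beurlingNorm ε p h)⁻¹) (.of_forall fun n x => ?_)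
    (fun x => ?_) ξ).norm (.of_forall (hh.norm_FT_geom_sum_mul_le hε hp hp1 hnorm hv hvC · ξ))
  · rw [norm_mul]
    gcongr
    exact norm_geom_sum_le_inv_one_sub (hh.norm_le hε x) hnorm n
  · rw [div_eq_inv_mul]
    exact (hasSum_geometric_of_norm_lt_one
      ((hh.norm_le hε x).trans_lt hnorm)).tendsto_sum_nat.mul_const _

end MemBeurling

end Neumann

namespace IsSCutoff

variable {s : ℝ} {φ : EuclideanSpace ℝ (Fin d) → ℂ}

-- Where `χ = 1`, the denominator `1 - (φ x₀ - φ (x₀ + r • y)) * χ y` equals `φ (x₀ + r • y)`.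
lemma exists_rescaled_local_inverse (hs : 1 < s) (hφ : IsSCutoff s φ) {x₀ : ℝᵈ}
    (hx₀ : φ x₀ = 1) :
    ∃ r : ℝ, 0 < r ∧ ∃ ψ g : ℝᵈ → ℂ, IsSCutoff s ψ ∧ (∀ y, ‖y‖ ≤ 1 / 4 → ψ y = 1) ∧
      Continuous g ∧ Integrable g ∧ (∃ C, ∀ ξ, ‖FT g ξ‖ ≤ C * Real.exp (-1 * ‖ξ‖ ^ (1 / s))) ∧
      ∀ y, ψ y = g y * φ (x₀ + r • y) := by
  have hs0 : 0 < s := zero_lt_one.trans hs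
  obtain ⟨χ, hχ, hχ_one, hχ_zero⟩ := exists_isSCutoff_eq_one (d := d) hs
  have hsmall := (tendsto_beurlingNorm_sub_comp_add_smul_mul hs.le hφ hχ x₀ 1).eventually_lt_const
    zero_lt_one
  obtain ⟨r, hnorm, hr, hr1⟩ := (hsmall.and (Ioc_mem_nhdsGT zero_lt_one)).exists
  set h : ℝᵈ → ℂ := fun x => (φ x₀ - φ (x₀ + r • x)) * χ x
  have hφc := hφ.continuous
  have hχc := hχ.continuous
  have hh : MemBeurling 1 (1 / s) h := by
    obtain ⟨K, hK⟩ := exists_norm_FT_sub_comp_add_smul_mul_le hs.le hφ hχ x₀ two_pos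
    exact memBeurling_of_norm_FT_le (by fun_prop) (hφ.integrable_sub_comp_add_smul_mul hχ x₀ r)
      (one_div_pos.2 hs0) one_lt_two (hK r hr hr1)
  have hne (y : ℝᵈ) : 1 - h y ≠ 0 := by
    rw [sub_ne_zero]
    exact fun hy => ((hh.norm_le zero_le_one y).trans_lt hnorm).ne (by rw [← hy, norm_one])
  have hψ : IsSCutoff s fun y => χ (0 + (4 : ℝ) • y) := hχ.comp_add_smul 0 four_ne_zero
  obtain ⟨C, -, hC⟩ := hψ.2.2 1 one_pos
  have hgc : Continuous fun y => χ (0 + (4 : ℝ) • y) / (1 - h y) :=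
    hψ.continuous.div (continuous_const.sub hh.continuous) hne
  refine ⟨r, hr, _, _, hψ, fun y hy => hχ_one _ ?_, hgc, ?_,
    ⟨_, hh.norm_FT_div_one_sub_le zero_le_one (by positivity) ((div_le_one hs0).2 hs.le) hnorm
      hψ.integrable hC⟩, fun y => ?_⟩
  · rw [zero_add, norm_smul, Real.norm_of_nonneg zero_le_four]
    linarith
  · simp only [div_eq_mul_inv] at hgc ⊢
    exact hgc.integrable_of_hasCompactSupport hψ.2.1.mul_right
  · rcases le_total ‖y‖ 1 with hy | hy
    · have hden : 1 - h y = φ (x₀ + r • y) := by simp only [h, hx₀, hχ_one y hy]; ring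
      rw [← hden, div_mul_cancel₀ _ (hne y)]
    · rw [hχ_zero, zero_div, zero_mul]
      rw [zero_add, norm_smul, Real.norm_of_nonneg zero_le_four]
      linarith

theorem exists_local_inverse (hs : 1 < s) (hφ : IsSCutoff s φ) {x₀ : ℝᵈ} (hx₀ : φ x₀ ≠ 0) :
    ∃ ψ g : ℝᵈ → ℂ, IsSCutoff s ψ ∧ (∃ U, IsOpen U ∧ x₀ ∈ U ∧ ∀ x ∈ U, ψ x = 1) ∧
      Continuous g ∧ Integrable g ∧
      (∃ C, ∃ ε > 0, ∀ ξ, ‖FT g ξ‖ ≤ C * Real.exp (-ε * ‖ξ‖ ^ (1 / s))) ∧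
      ∀ x, ψ x = g x * φ x := by
  obtain ⟨r, hr, ψ, g, hψ, hψ_one, hgc, hg, ⟨C, hC⟩, hψg⟩ :=
    (hφ.const_mul (φ x₀)⁻¹).exists_rescaled_local_inverse hs (inv_mul_cancel₀ hx₀)
  have hr' : r⁻¹ ≠ 0 := inv_ne_zero hr.ne'
  have hg_comp : Integrable fun x => g (-(r⁻¹ • x₀) + r⁻¹ • x) :=
    (hg.comp_add_left (-(r⁻¹ • x₀))).comp_smul hr'
  refine ⟨fun x => ψ (-(r⁻¹ • x₀) + r⁻¹ • x), fun x => (φ x₀)⁻¹ * g (-(r⁻¹ • x₀) + r⁻¹ • x),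
    hψ.comp_add_smul _ hr', ⟨Metric.ball x₀ (r / 4), Metric.isOpen_ball,
      Metric.mem_ball_self (by positivity), fun x hx => hψ_one _ ?_⟩,
    by fun_prop, hg_comp.const_mul _,
    ⟨‖(φ x₀)⁻¹‖ * ((|r⁻¹| ^ d)⁻¹ * C), r ^ (1 / s), by positivity, fun ξ => ?_⟩, fun x => ?_⟩
  · rw [mem_ball_iff_norm] at hx
    rw [neg_add_eq_sub, ← smul_sub, norm_smul, norm_inv, Real.norm_of_nonneg hr.le,
      inv_mul_le_iff₀ hr]
    linarith
  · rw [FT_const_mul, norm_mul, norm_FT_comp_add_smul g _ hr', inv_inv, mul_assoc, mul_assoc]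
    gcongr
    refine (hC _).trans_eq ?_
    rw [norm_smul, Real.norm_of_nonneg hr.le, Real.mul_rpow hr.le (norm_nonneg _), neg_one_mul,
      neg_mul]
  · beta_reduce
    rw [hψg, neg_add_eq_sub, ← smul_sub, smul_inv_smul₀ hr.ne', add_sub_cancel]
    ring

end IsSCutoff

/-! ### Propagation of decay to a smaller cone -/

open scoped Pointwise in
lemma IsCone.infDist_smul_compl {Γ : Set ℝᵈ} (hΓ : IsCone Γ) {t : ℝ} (ht : 0 < t) (ξ : ℝᵈ) :
    Metric.infDist (t • ξ) Γᶜ = t * Metric.infDist ξ Γᶜ := by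
  have hsmul : t • Γᶜ = Γᶜ := by
    ext η
    rw [mem_smul_set_iff_inv_smul_mem₀ ht.ne', mem_compl_iff, mem_compl_iff, not_iff_not]
    exact ⟨fun h => smul_inv_smul₀ ht.ne' η ▸ hΓ.2 _ h t ht, fun h => hΓ.2 η h _ (inv_pos.2 ht)⟩
  conv_lhs => rw [← hsmul, infDist_smul₀ ht.ne', Real.norm_of_nonneg ht.le]

lemma exists_isCone_mul_norm_le {Γ : Set ℝᵈ} (hΓo : IsOpen Γ) (hΓ : IsCone Γ) {ξ₀ : ℝᵈ}
    (hξ₀ : ξ₀ ∈ Γ) :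
    ∃ Γ' : Set ℝᵈ, IsOpen Γ' ∧ IsCone Γ' ∧ ξ₀ ∈ Γ' ∧ ∃ c > 0,
      ∀ ξ ∈ Γ', ∀ η, ξ - η ∉ Γ → c * ‖ξ‖ ≤ ‖η‖ := by
  have hΓ_zero : (0 : ℝᵈ) ∈ Γᶜ := hΓ.1
  have hnorm : 0 < ‖ξ₀‖ := norm_pos_iff.2 fun h => hΓ.1 (h ▸ hξ₀)
  have hdist : 0 < Metric.infDist ξ₀ Γᶜ :=
    (hΓo.isClosed_compl.notMem_iff_infDist_pos ⟨0, hΓ_zero⟩).1 (not_not.2 hξ₀)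
  refine ⟨{ξ | Metric.infDist ξ₀ Γᶜ / (2 * ‖ξ₀‖) * ‖ξ‖ < Metric.infDist ξ Γᶜ}, ?_,
    ⟨?_, fun ξ hξ t ht => ?_⟩, ?_, _, by positivity, fun ξ hξ η hη => hξ.le.trans ?_⟩
  · exact isOpen_lt (by fun_prop) (Metric.continuous_infDist_pt _)
  · simp [Metric.infDist_zero_of_mem hΓ_zero]
  · rw [mem_ofPred_eq, hΓ.infDist_smul_compl ht, norm_smul, mul_left_comm,
      Real.norm_of_nonneg ht.le]
    exact mul_lt_mul_of_pos_left hξ ht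
  · rw [mem_ofPred_eq, div_mul_eq_mul_div, div_lt_iff₀ (by positivity)]
    nlinarith
  · exact (Metric.infDist_le_dist_of_mem hη).trans_eq (dist_self_sub_right ξ η)

section ConeEstimate

variable {p c ε k κ : ℝ} {ξ η : EuclideanSpace ℝ (Fin d)}

lemma exp_neg_mul_norm_rpow_le_of_le (hp : 0 ≤ p) (hp1 : p ≤ 1) (hκ : 0 ≤ κ) (hκε : κ ≤ ε)
    (hκk : κ ≤ k) :
    Real.exp (-ε * ‖η‖ ^ p) ≤ Real.exp (-κ * ‖ξ‖ ^ p) * Real.exp (k * ‖ξ - η‖ ^ p) := by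
  rw [← Real.exp_add]
  gcongr
  have hη : κ * ‖η‖ ^ p ≤ ε * ‖η‖ ^ p := by gcongr
  have hξη : κ * ‖ξ - η‖ ^ p ≤ k * ‖ξ - η‖ ^ p := by gcongr
  linarith [mul_le_mul_of_nonneg_left (norm_rpow_le_norm_sub_rpow_add hp hp1 ξ η) hκ]

lemma exp_neg_mul_norm_rpow_le_of_mul_norm_le (hp : 0 ≤ p) (hc : 0 ≤ c) (hε : 0 ≤ ε)
    (hκ : κ ≤ ε / 2 * c ^ p) (h : c * ‖ξ‖ ≤ ‖η‖) :
    Real.exp (-ε * ‖η‖ ^ p) ≤ Real.exp (-κ * ‖ξ‖ ^ p) * Real.exp (-(ε / 2) * ‖η‖ ^ p) := by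
  rw [← Real.exp_add]
  gcongr
  have hcξ : κ * ‖ξ‖ ^ p ≤ ε / 2 * ‖η‖ ^ p := calc
    κ * ‖ξ‖ ^ p ≤ ε / 2 * c ^ p * ‖ξ‖ ^ p := by gcongr
    _ = ε / 2 * (c * ‖ξ‖) ^ p := by rw [Real.mul_rpow hc (norm_nonneg ξ), mul_assoc]
    _ ≤ ε / 2 * ‖η‖ ^ p := by gcongr
  linarith

-- Convolution splits according to whether `ξ - η ∈ Γ`, where the weighted function is used, or
-- `ξ - η ∉ Γ`, where `‖ξ‖` is controlled by `‖η‖`.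
lemma exp_neg_mul_norm_rpow_mul_le (hp : 0 ≤ p) (hp1 : p ≤ 1) (hc : 0 ≤ c) (hκ : 0 ≤ κ)
    (hκε : κ ≤ ε) (hκk : κ ≤ k) (hκc : κ ≤ ε / 2 * c ^ p) {Γ : Set ℝᵈ}
    (hcone : ξ - η ∉ Γ → c * ‖ξ‖ ≤ ‖η‖) {U : ℝᵈ → ℝ} {B : ℝ} (hU : ∀ ζ, 0 ≤ U ζ)
    (hUB : ∀ ζ, U ζ ≤ B) :
    Real.exp (-ε * ‖η‖ ^ p) * U (ξ - η) ≤ Real.exp (-κ * ‖ξ‖ ^ p) *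
      (Γ.indicator (fun ζ => U ζ * Real.exp (k * ‖ζ‖ ^ p)) (ξ - η) +
        B * Real.exp (-(ε / 2) * ‖η‖ ^ p)) := by
  have hB : 0 ≤ B := (hU 0).trans (hUB 0)
  by_cases h : ξ - η ∈ Γ
  · refine (mul_le_mul_of_nonneg_right (exp_neg_mul_norm_rpow_le_of_le (ξ := ξ) hp hp1 hκ
      hκε hκk) (hU _)).trans ?_
    rw [mul_assoc, mul_comm (Real.exp (k * _)), indicator_of_mem h]
    gcongr
    exact le_add_of_nonneg_right (by positivity)
  · refine (mul_le_mul (exp_neg_mul_norm_rpow_le_of_mul_norm_le hp hc (hκ.trans hκε) hκc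
      (hcone h)) (hUB _) (hU _) (by positivity)).trans ?_
    rw [mul_assoc, mul_comm _ B, indicator_of_notMem h, zero_add]

theorem exists_norm_FT_mul_le_exp_of_integrableOn (hp : 0 < p) (hp1 : p ≤ 1) (hc : 0 < c)
    (hε : 0 < ε) (hk : 0 < k) {Γ Γ' : Set ℝᵈ} (hΓ : MeasurableSet Γ)
    (hcone : ∀ ξ ∈ Γ', ∀ η, ξ - η ∉ Γ → c * ‖ξ‖ ≤ ‖η‖) {g u : ℝᵈ → ℂ} {C : ℝ}
    (hgc : Continuous g) (hg : Integrable g) (hgC : ∀ ξ, ‖FT g ξ‖ ≤ C * Real.exp (-ε * ‖ξ‖ ^ p))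
    (hu : Integrable u)
    (huΓ : IntegrableOn (fun ξ => ‖FT u ξ‖ * Real.exp (k * ‖ξ‖ ^ p)) Γ) :
    ∃ C' κ : ℝ, 0 < κ ∧
      ∀ ξ ∈ Γ', ‖FT (fun x => g x * u x) ξ‖ ≤ C' * Real.exp (-κ * ‖ξ‖ ^ p) := by
  obtain ⟨κ, hκ, hκ_lt⟩ : ∃ κ, 0 < κ ∧ κ < min (min ε k) (ε / 2 * c ^ p) :=
    exists_between (by positivity)
  obtain ⟨⟨hκε, hκk⟩, hκc⟩ : (κ ≤ ε ∧ κ ≤ k) ∧ κ ≤ ε / 2 * c ^ p := by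
    simpa only [le_min_iff] using hκ_lt.le
  have hC : 0 ≤ C := nonneg_of_mul_nonneg_left ((norm_nonneg _).trans (hgC 0)) (Real.exp_pos _)
  set B := fourierFactor d * ∫ x, ‖u x‖
  set Φ : ℝᵈ → ℝ := Γ.indicator fun ξ => ‖FT u ξ‖ * Real.exp (k * ‖ξ‖ ^ p)
  have hpoint (ξ : ℝᵈ) (hξ : ξ ∈ Γ') (η : ℝᵈ) : ‖FT g η‖ * ‖FT u (ξ - η)‖ ≤
      C * Real.exp (-κ * ‖ξ‖ ^ p) * (Φ (ξ - η) + B * Real.exp (-(ε / 2) * ‖η‖ ^ p)) := by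
    refine (mul_le_mul_of_nonneg_right (hgC η) (norm_nonneg _)).trans ?_
    rw [mul_assoc, mul_assoc]
    exact mul_le_mul_of_nonneg_left (exp_neg_mul_norm_rpow_mul_le hp.le hp1 hc.le hκ.le hκε hκk
      hκc (hcone ξ hξ η) (fun _ => norm_nonneg _) (norm_FT_le u)) hC
  have hΦ : Integrable Φ := huΓ.integrable_indicator hΓ
  have hexp : Integrable fun η : ℝᵈ => B * Real.exp (-(ε / 2) * ‖η‖ ^ p) :=
    (integrable_exp_neg_mul_norm_rpow volume (half_pos hε) hp).const_mul B
  refine ⟨fourierFactor d * C * ((∫ η, Φ η) + ∫ η : ℝᵈ, B * Real.exp (-(ε / 2) * ‖η‖ ^ p)), κ,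
    hκ, fun ξ hξ => ?_⟩
  refine (norm_FT_mul_le hgc hg (integrable_FT_of_norm_le hg hε hp hgC) hu
    (((hΦ.comp_sub_left ξ).add hexp).const_mul _) (hpoint ξ hξ)).trans_eq ?_
  simp only [Pi.add_apply]
  rw [integral_const_mul, integral_add (hΦ.comp_sub_left ξ) hexp, integral_sub_left_eq_self Φ]
  ring

end ConeEstimate

/-! ### Weighted Fourier–Lebesgue seminorms -/

section FLSemi

variable {p k : ℝ} {q : ℝ≥0∞} {u : EuclideanSpace ℝ (Fin d) → ℂ}
  {Γ : Set (EuclideanSpace ℝ (Fin d))}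

lemma memLp_norm_FT_mul_exp (hu : Integrable u) (hp : 0 ≤ p)
    (hfin : FLSemi (fun ξ => Real.exp (k * ‖ξ‖ ^ p)) q u Γ ≠ ∞) :
    MemLp (fun ξ => ‖FT u ξ‖ * Real.exp (k * ‖ξ‖ ^ p)) q (volume.restrict Γ) := by
  refine ⟨?_, hfin.lt_top⟩
  have := continuous_FT hu
  fun_prop (disch := exact hp)

lemma integrableOn_norm_FT_mul_exp_of_one_le (hu : Integrable u) (hp : 0 < p) (hk : 0 < k)
    (hq : 1 ≤ q) (hfin : FLSemi (fun ξ => Real.exp (k * ‖ξ‖ ^ p)) q u Γ ≠ ∞) :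
    IntegrableOn (fun ξ => ‖FT u ξ‖ * Real.exp (k / 2 * ‖ξ‖ ^ p)) Γ := by
  have : ENNReal.HolderConjugate q (ENNReal.conjExponent q) := .conjExponent hq
  have hweight : MemLp (fun ξ : ℝᵈ => Real.exp (-(k / 2) * ‖ξ‖ ^ p)) (ENNReal.conjExponent q)
      (volume.restrict Γ) := (memLp_exp_neg_mul_norm_rpow volume (half_pos hk) hp _).restrict Γ
  have hprod := hweight.mul (r := 1) (memLp_norm_FT_mul_exp hu hp.le hfin)
  refine (memLp_one_iff_integrable.1 hprod).congr (.of_forall fun ξ => ?_)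
  simp only [Pi.mul_apply]
  rw [mul_assoc, ← Real.exp_add]
  ring_nf

lemma integrableOn_norm_FT_mul_exp_of_le_one (hu : Integrable u) (hp : 0 ≤ p) (hq0 : q ≠ 0)
    (hq : q ≤ 1) (hfin : FLSemi (fun ξ => Real.exp (k * ‖ξ‖ ^ p)) q u Γ ≠ ∞) :
    IntegrableOn (fun ξ => ‖FT u ξ‖ * Real.exp (k * q.toReal * ‖ξ‖ ^ p)) Γ := by
  have hq_top : q ≠ ∞ := ne_top_of_le_ne_top ENNReal.one_ne_top hq
  have hq1 : 0 ≤ 1 - q.toReal := sub_nonneg.2 (ENNReal.toReal_mono ENNReal.one_ne_top hq)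
  set B := fourierFactor d * ∫ x, ‖u x‖
  refine (((memLp_norm_FT_mul_exp hu hp hfin).integrable_norm_rpow hq0 hq_top).const_mul
    (B ^ (1 - q.toReal))).mono' ?_ (.of_forall fun ξ => ?_)
  · have := continuous_FT hu
    fun_prop (disch := exact hp)
  calc ‖‖FT u ξ‖ * Real.exp (k * q.toReal * ‖ξ‖ ^ p)‖
      = ‖FT u ξ‖ ^ (1 - q.toReal) * ‖FT u ξ‖ ^ q.toReal *
          Real.exp (k * ‖ξ‖ ^ p) ^ q.toReal := by
        rw [← Real.rpow_add' (norm_nonneg _) (by simp), sub_add_cancel, Real.rpow_one,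
          ← Real.exp_mul, mul_right_comm k, Real.norm_of_nonneg (by positivity)]
    _ ≤ B ^ (1 - q.toReal) * ‖FT u ξ‖ ^ q.toReal * Real.exp (k * ‖ξ‖ ^ p) ^ q.toReal := by
        gcongr
        exact norm_FT_le u ξ
    _ = B ^ (1 - q.toReal) * ‖‖FT u ξ‖ * Real.exp (k * ‖ξ‖ ^ p)‖ ^ q.toReal := by
        rw [Real.norm_of_nonneg (by positivity), Real.mul_rpow (norm_nonneg _) (by positivity),
          mul_assoc]

lemma exists_integrableOn_norm_FT_mul_exp (hu : Integrable u) (hp : 0 < p) (hk : 0 < k)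
    (hq : q ≠ 0) (hfin : FLSemi (fun ξ => Real.exp (k * ‖ξ‖ ^ p)) q u Γ ≠ ∞) :
    ∃ k' > 0, IntegrableOn (fun ξ => ‖FT u ξ‖ * Real.exp (k' * ‖ξ‖ ^ p)) Γ := by
  rcases le_total 1 q with hq1 | hq1
  · exact ⟨k / 2, half_pos hk, integrableOn_norm_FT_mul_exp_of_one_le hu hp hk hq1 hfin⟩
  · have hq_pos : 0 < q.toReal :=
      ENNReal.toReal_pos hq (ne_top_of_le_ne_top ENNReal.one_ne_top hq1)
    exact ⟨k * q.toReal, by positivity,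
      integrableOn_norm_FT_mul_exp_of_le_one hu hp.le hq hq1 hfin⟩

lemma FLSemi_ne_top_of_norm_FT_le (hΓ : MeasurableSet Γ) (hp : 0 < p) (q : ℝ≥0∞) {C c : ℝ}
    (hkc : k < c) (h : ∀ ξ ∈ Γ, ‖FT u ξ‖ ≤ C * Real.exp (-c * ‖ξ‖ ^ p)) :
    FLSemi (fun ξ => Real.exp (k * ‖ξ‖ ^ p)) q u Γ ≠ ∞ := by
  have hdecay : MemLp (fun ξ : ℝᵈ => C * Real.exp (-(c - k) * ‖ξ‖ ^ p)) q (volume.restrict Γ) :=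
    ((memLp_exp_neg_mul_norm_rpow volume (sub_pos.2 hkc) hp q).restrict Γ).const_mul C
  refine ne_top_of_le_ne_top hdecay.eLpNorm_ne_top (eLpNorm_mono_ae_real ?_)
  filter_upwards [ae_restrict_mem hΓ] with ξ hξ
  rw [Real.norm_of_nonneg (by positivity)]
  exact mul_exp_le_of_le_mul_exp (h ξ hξ)

end FLSemi

/-! ### Comparison of the wave-front sets -/

section WaveFront

variable {s : ℝ} {q : ℝ≥0∞} {f : EuclideanSpace ℝ (Fin d) → ℂ}
  {z : EuclideanSpace ℝ (Fin d) × EuclideanSpace ℝ (Fin d)}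

lemma IsSCutoff.integrable_mul {φ : ℝᵈ → ℂ} (hφ : IsSCutoff s φ) (hf : LocallyIntegrable f) :
    Integrable fun x => φ x * f x :=
  hf.integrable_smul_left_of_hasCompactSupport hφ.continuous hφ.2.1

lemma notMem_WFs_of_norm_FT_le {φ : ℝᵈ → ℂ} (hφ : IsSCutoff s φ)
    (hφ_one : ∃ U, IsOpen U ∧ z.1 ∈ U ∧ ∀ x ∈ U, φ x = 1) {Γ : Set ℝᵈ} (hΓo : IsOpen Γ)
    (hΓ : IsCone Γ) (hz : z.2 ∈ Γ) {C k : ℝ} (hk : 0 < k)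
    (h : ∀ ξ ∈ Γ, ‖FT (fun x => φ x * f x) ξ‖ ≤ C * Real.exp (-k * ‖ξ‖ ^ (1 / s))) :
    z ∉ WFs s f := by
  refine fun hmem => hmem.2 ⟨φ, hφ, hφ_one, Γ, hΓo, hΓ, hz, max C 1, k, by positivity, hk,
    fun ξ hξ => (h ξ hξ).trans ?_⟩
  gcongr
  exact le_max_left C 1

theorem WFs_subset_WF_FL (hs : 1 < s) (hq : q ≠ 0) (hf : LocallyIntegrable f) {k : ℝ}
    (hk : 0 < k) : WFs s f ⊆ WF_FL s q (fun ξ => Real.exp (k * ‖ξ‖ ^ (1 / s))) f := by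
  have hs0 : 0 < s := zero_lt_one.trans hs
  have hp : 0 < 1 / s := one_div_pos.2 hs0
  refine fun z hz => ⟨hz.1, fun φ hφ hφ_ne Γ hΓo hΓ hzΓ => ?_⟩
  by_contra hfin
  have hφf := hφ.integrable_mul hf
  obtain ⟨k', hk', hint⟩ := exists_integrableOn_norm_FT_mul_exp hφf hp hk hq hfin
  obtain ⟨ψ, g, hψ, hψ_one, hgc, hg, ⟨C, ε, hε, hC⟩, hψg⟩ := hφ.exists_local_inverse hs hφ_ne
  obtain ⟨Γ', hΓ'o, hΓ', hzΓ', c, hc, hcone⟩ := exists_isCone_mul_norm_le hΓo hΓ hzΓ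
  obtain ⟨C', κ, hκ, hdecay⟩ := exists_norm_FT_mul_le_exp_of_integrableOn hp
    ((div_le_one hs0).2 hs.le) hc hε hk' hΓo.measurableSet hcone hgc hg hC hφf hint
  refine notMem_WFs_of_norm_FT_le (C := C') hψ hψ_one hΓ'o hΓ' hzΓ' hκ ?_ hz
  simpa only [hψg, mul_assoc] using hdecay

theorem iInter_WF_FL_subset_WFs (hs : 0 < s) (q : ℝ≥0∞) (f : ℝᵈ → ℂ) :
    ⋂ k > (0 : ℝ), WF_FL s q (fun ξ => Real.exp (k * ‖ξ‖ ^ (1 / s))) f ⊆ WFs s f := by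
  intro z hz
  simp only [mem_iInter] at hz
  refine ⟨(hz 1 one_pos).1, ?_⟩
  rintro ⟨φ, hφ, ⟨U, -, hzU, hU⟩, Γ, hΓo, hΓ, hzΓ, C, k, -, hk, hdecay⟩
  have hφ_ne : φ z.1 ≠ 0 := by simp [hU _ hzU]
  exact FLSemi_ne_top_of_norm_FT_le hΓo.measurableSet (one_div_pos.2 hs) q (half_lt_self hk) hdecay
    ((hz (k / 2) (half_pos hk)).2 φ hφ hφ_ne Γ hΓo hΓ hzΓ)

end WaveFront

theorem stmt5_general {d : ℕ} {s : ℝ} (hs : 1 < s) {q : ℝ≥0∞} (hq : q ≠ 0)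
    {f : EuclideanSpace ℝ (Fin d) → ℂ} (hf : LocallyIntegrable f) :
    ⋂ k > (0 : ℝ), WF_FL s q (fun ξ => Real.exp (k * ‖ξ‖ ^ (1 / s))) f = WFs s f :=
  (iInter_WF_FL_subset_WFs (zero_lt_one.trans hs) q f).antisymm
    (subset_iInter₂ fun _ hk => WFs_subset_WF_FL hs hq hf hk)

theorem stmt5 {d : ℕ} (s : ℝ) (hs : 1 < s) (q : ℝ≥0∞) (hq : 1 ≤ q)
    (f : EuclideanSpace ℝ (Fin d) → ℂ) (hf : Integrable f) (hfc : HasCompactSupport f) :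
    ⋂ k > (0 : ℝ), WF_FL s q (fun ξ => Real.exp (k * ‖ξ‖ ^ (1 / s))) f = WFs s f :=
  stmt5_general hs (zero_lt_one.trans_le hq).ne' hf.locallyIntegrable

end Paper
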